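/- Let Σ be a finite alphabet, let P ⊆ Σ^m be non-degenerate, and let Φ ⊆ {(φ,…,φ) : φ ∈ Sym(Σ)} be a set of diagonal tuples of permutations of Σ. If P is (1,Φ)-trivial but not Φ-trivial, then one of the following holds: (i) P is vulnerable; or (ii) |Σ| = 2 and there is a polymorphism f_1,…,f_m : Σ² → Σ of P in which every f_i is unanimous and non-dictatorial. -/

import Mathlib

/-- `f₁,…,f_m : Σ^p → Σ` constitute a polymorphism of the predicate `P ⊆ Σ^m`. -/
def IsPolymorphismOf {α : Type*} {m p : ℕ} (P : Set (Fin m → α))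
    (f : Fin m → (Fin p → α) → α) : Prop :=
  ∀ xs : Fin p → Fin m → α, (∀ k, xs k ∈ P) →
    (fun i => f i (fun k => xs k i)) ∈ P

/-- A certificate for `P`: a partial mapping (encoded via `Option`) forcing membership. -/
def IsCert {α : Type*} {m : ℕ} (P : Set (Fin m → α)) (ρ : Fin m → Option α) : Prop :=
  ∀ x : Fin m → α, (∀ i σ, ρ i = some σ → x i = σ) → x ∈ P

/-- The functions `f₁,…,f_m` conform to the partial mapping `ρ`. -/
def Conforms {α : Type*} {m p : ℕ} (f : Fin m → (Fin p → α) → α)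
    (ρ : Fin m → Option α) : Prop :=
  ∀ i σ, ρ i = some σ → ∀ x, f i x = σ

/-- The functions `f₁,…,f_m` are dictatorial with respect to `Φ`. -/
def IsDictatorial {α : Type*} {m p : ℕ} (Φ : Set (Fin m → Equiv.Perm α))
    (f : Fin m → (Fin p → α) → α) : Prop :=
  ∃ k : Fin p, ∃ φ ∈ Φ, ∀ i x, f i x = φ i (x k)

/-- `P` is `(p,Φ)`-trivial. -/
def TrivialAt {α : Type*} {m : ℕ} (P : Set (Fin m → α))
    (Φ : Set (Fin m → Equiv.Perm α)) (p : ℕ) : Prop :=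
  ∀ f : Fin m → (Fin p → α) → α, IsPolymorphismOf P f →
    IsDictatorial Φ f ∨ ∃ ρ, IsCert P ρ ∧ Conforms f ρ

/-- `P` is `Φ`-trivial: `(p,Φ)`-trivial for every `p ≥ 1`. -/
def PhiTrivial {α : Type*} {m : ℕ} (P : Set (Fin m → α))
    (Φ : Set (Fin m → Equiv.Perm α)) : Prop :=
  ∀ p : ℕ, 1 ≤ p → TrivialAt P Φ p

/-- `P` is non-degenerate: full projections, and `P` depends on all coordinates. -/
def NonDegenerate {α : Type*} {m : ℕ} (P : Set (Fin m → α)) : Prop :=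
  (∀ i : Fin m, ∀ σ : α, ∃ x ∈ P, x i = σ) ∧
  (∀ i : Fin m, ∃ x ∈ P, ∃ y ∉ P, ∀ j, j ≠ i → x j = y j)

/-- `P` is vulnerable: some value of some coordinate forces membership in `P`. -/
def Vulnerable {α : Type*} {m : ℕ} (P : Set (Fin m → α)) : Prop :=
  ∃ i : Fin m, ∃ σ : α, ∀ x : Fin m → α, x i = σ → x ∈ P

/-- A binary function is unanimous. -/
def Unanimous {α : Type*} (g : (Fin 2 → α) → α) : Prop :=
  ∀ σ : α, g (fun _ => σ) = σ

/-- A binary function is dictatorial: it is a function of a single one of its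
two coordinates. -/
def IsDictFn {α : Type*} (g : (Fin 2 → α) → α) : Prop :=
  ∃ k : Fin 2, ∃ u : α → α, ∀ x, g x = u (x k)

/-!
Let `n + 1` be the least arity at which `P` fails to be trivial, witnessed by `f`, and suppose that
`P` is not vulnerable. Freezing all arguments of `f` but the `k`-th at members of `P` gives a unary
polymorphism (a line), which is a diagonal permutation or conforms to a certificate. If all lines in
direction `k` conformed to certificates, every choice of values of `f` on the lines would be an
`n`-ary polymorphism; such choices can be altered at single points, and this freedom contradicts
`n`-ary triviality. So each direction has a diagonal line. If `n ≥ 2`, freezing one argument along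
such a line leaves a dictator, and two incompatible dictators arise; hence `f` is binary.

In the binary case, let `T` consist of the members `z` of `P` whose line `F(·, z)` is a diagonal
permutation. Self-maps of `T` extend to unary polymorphisms, so they are injective or constant and
`T` has at most two elements. If it has two, then `P = T` is a pair of tuples that differ
everywhere. If `T = {y}`, then `F i a b` is `φ a` for `b = y i` and `ψ b` otherwise. Either way
`|Σ| = 2` and `P` is closed under the OR operation with a suitable neutral tuple.
-/

open Equiv Function Set

section Certificates

variable {α β : Type*} {m : ℕ} {P : Set (Fin m → α)} {f : Fin m → β → α}

/-- The functions `f` conform to some certificate for `P`. Their domain is arbitrary, so that the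
notion covers both `p`-ary operations, as in `Conforms`, and plain functions `α → α`. -/
def ConformsToCert (P : Set (Fin m → α)) (f : Fin m → β → α) : Prop :=
  ∃ ρ, IsCert P ρ ∧ ∀ i σ, ρ i = some σ → ∀ b, f i b = σ

theorem ConformsToCert.mem (hf : ConformsToCert P f) {x : Fin m → α}
    (hx : ∀ i c, (∀ b, f i b = c) → x i = c) : x ∈ P := by
  obtain ⟨ρ, hρ, hfρ⟩ := hf
  exact hρ x fun i σ hi => hx i σ (hfρ i σ hi)

theorem ConformsToCert.vulnerable [Nonempty β] (hf : ConformsToCert P f) (i : Fin m)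
    (hi : ∀ j ≠ i, ∀ c, ∃ b, f j b ≠ c) : Vulnerable P := by
  obtain ⟨b₀⟩ := ‹Nonempty β›
  refine ⟨i, f i b₀, fun x hx => hf.mem fun j c hc => ?_⟩
  rcases eq_or_ne j i with rfl | hj
  · exact hx.trans (hc b₀)
  · obtain ⟨b, hb⟩ := hi j hj c
    exact absurd (hc b) hb

theorem ConformsToCert.exists_const [Nonempty β] [Nonempty (Fin m)] (hf : ConformsToCert P f)
    (hv : ¬ Vulnerable P) : ∃ i c, ∀ b, f i b = c := by
  by_contra! hne
  exact hv (hf.vulnerable (Classical.arbitrary _) fun j _ => hne j)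

theorem eq_of_forall_ne_eq [Nonempty β] [Nontrivial (Fin m)] (hv : ¬ Vulnerable P) {u : β → α}
    (hu : ∀ c, ∃ b, u b ≠ c) {i : Fin m} (hfu : ∀ j ≠ i, f j = u)
    (hf : (∃ w, ∀ j, f j = w) ∨ ConformsToCert P f) : f i = u := by
  rcases hf with ⟨w, hw⟩ | hf
  · obtain ⟨j, hj⟩ := exists_ne i
    rw [hw i, ← hw j, hfu j hj]
  · exact absurd (hf.vulnerable i fun j hj => hfu j hj ▸ hu) hv

end Certificates

section NonDegenerate

variable {α : Type*} {m : ℕ} [Nonempty (Fin m)] {P : Set (Fin m → α)}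

theorem NonDegenerate.nontrivial (hP : NonDegenerate P) : Nontrivial α := by
  obtain ⟨x, hx, y, hy, -⟩ := hP.2 (Classical.arbitrary _)
  by_contra hα
  have := not_nontrivial_iff_subsingleton.1 hα
  exact hy (Subsingleton.elim x y ▸ hx)

theorem NonDegenerate.nontrivial_index (hP : NonDegenerate P) : Nontrivial (Fin m) := by
  by_contra hm
  have := not_nontrivial_iff_subsingleton.1 hm
  have i : Fin m := Classical.arbitrary _
  obtain ⟨-, -, y, hy, -⟩ := hP.2 i
  obtain ⟨z, hz, hzy⟩ := hP.1 i (y i)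
  have hzy' : z = y := funext fun j => Subsingleton.elim i j ▸ hzy
  exact hy (hzy' ▸ hz)

end NonDegenerate

section Unary

variable {α : Type*} {m : ℕ} {P : Set (Fin m → α)} {Φ : Set (Fin m → Perm α)}

/-- All components of `u` are one and the same permutation of `α`. -/
def IsDiagonalPerm (u : Fin m → α → α) : Prop :=
  ∃ φ : Perm α, ∀ i a, u i a = φ a

/-- The consequence of `(1, Φ)`-triviality for diagonal `Φ` that the argument uses, phrased for
functions `α → α` rather than `(Fin 1 → α) → α`. -/
def UnaryTrivial (P : Set (Fin m → α)) : Prop :=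
  ∀ u : Fin m → α → α, (∀ x ∈ P, (fun i => u i (x i)) ∈ P) →
    IsDiagonalPerm u ∨ ConformsToCert P u

theorem IsDictatorial.exists_perm [Nonempty (Fin m)] (hΦ : ∀ φ ∈ Φ, ∀ i j, φ i = φ j) {p : ℕ}
    {f : Fin m → (Fin p → α) → α} (hf : IsDictatorial Φ f) :
    ∃ (k : Fin p) (χ : Perm α), ∀ i x, f i x = χ (x k) := by
  obtain ⟨k, φ, hφ, h⟩ := hf
  exact ⟨k, φ (Classical.arbitrary _), fun i x => hΦ φ hφ i _ ▸ h i x⟩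

theorem TrivialAt.unaryTrivial [Nonempty (Fin m)] (hΦ : ∀ φ ∈ Φ, ∀ i j, φ i = φ j)
    (h1 : TrivialAt P Φ 1) : UnaryTrivial P := by
  intro u hu
  rcases h1 (fun i v => u i (v 0)) fun xs hxs => hu _ (hxs 0) with hd | ⟨ρ, hρ, hc⟩
  · obtain ⟨k, χ, h⟩ := hd.exists_perm hΦ
    exact Or.inl ⟨χ, fun i a => h i fun _ => a⟩
  · exact Or.inr ⟨ρ, hρ, fun i σ hi a => hc i σ hi fun _ => a⟩

end Unary

section Selection

variable {α β : Type*} {h : β → α → α} {g : β → α}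

/-- `g` agrees with each constant function among the `h v`; where `h v` is not constant, the value
`g v` is arbitrary. -/
def Selects (g : β → α) (h : β → α → α) : Prop :=
  ∀ v c, (∀ a, h v a = c) → g v = c

theorem Selects.update [DecidableEq β] (hg : Selects g h) {v : β} (hv : ∀ c, ∃ a, h v a ≠ c)
    (b : α) : Selects (update g v b) h := by
  intro w c hc
  rcases eq_or_ne w v with rfl | hwv
  · obtain ⟨a, ha⟩ := hv c
    exact absurd (hc a) ha
  · rw [update_of_ne hwv]
    exact hg w c hc

theorem exists_selects [Nontrivial α] [Nontrivial β] (h : β → α → α) :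
    ∃ g, Selects g h ∧ ∀ c, (∀ v, g v = c) → ∀ v a, h v a = c := by
  classical
  have a₀ : α := Classical.arbitrary α
  have hg₀ : Selects (fun v => h v a₀) h := fun v c hc => hc a₀
  by_cases hconst : ∀ v, ∃ c, ∀ a, h v a = c
  · refine ⟨_, hg₀, fun c hc v a => ?_⟩
    obtain ⟨d, hd⟩ := hconst v
    rw [hd, ← hd a₀, hc]
  · push Not at hconst
    obtain ⟨v, hv⟩ := hconst
    obtain ⟨w, hwv⟩ := exists_ne v
    obtain ⟨b, hb⟩ := exists_ne (h w a₀)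
    refine ⟨_, hg₀.update hv b, fun c hc => absurd ?_ hb⟩
    simpa [hwv] using (hc v).trans (hc w).symm

end Selection

section Lines

variable {α : Type*} {m n : ℕ} {P : Set (Fin m → α)} {Φ : Set (Fin m → Perm α)}

/-- The unary functions obtained from `f` by letting its `k`-th argument vary and freezing every
other argument `l` at the tuple `xs l`. -/
def line {p : ℕ} (f : Fin m → (Fin p → α) → α) (k : Fin p) (xs : Fin p → Fin m → α) :
    Fin m → α → α :=
  fun i a => f i (update (fun l => xs l i) k a)

theorem IsPolymorphismOf.line_mem {p : ℕ} {f : Fin m → (Fin p → α) → α}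
    (hf : IsPolymorphismOf P f) (k : Fin p) {xs : Fin p → Fin m → α} (hxs : ∀ l, xs l ∈ P)
    {x : Fin m → α} (hx : x ∈ P) : (fun i => line f k xs i (x i)) ∈ P := by
  have hmem : ∀ l, update xs k x l ∈ P :=
    (forall_update_iff xs fun _ y => y ∈ P).2 ⟨hx, fun l _ => hxs l⟩
  convert hf _ hmem using 2 with i
  refine congrArg (f i) (funext fun l => ?_)
  rcases eq_or_ne l k with rfl | hl <;> simp [*]

theorem insertNth_apply_eq (k : Fin (n + 1)) (y : Fin m → α) (ys : Fin n → Fin m → α) (i : Fin m) :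
    (fun l => (k.insertNth y ys : Fin (n + 1) → Fin m → α) l i) =
      k.insertNth (y i) fun l => ys l i := by
  simp [funext_iff, Fin.forall_iff_succAbove k]

theorem insertNth_mem {k : Fin (n + 1)} {y : Fin m → α} {ys : Fin n → Fin m → α} (hy : y ∈ P)
    (hys : ∀ l, ys l ∈ P) (l : Fin (n + 1)) : (k.insertNth y ys : Fin (n + 1) → Fin m → α) l ∈ P :=
  by
  revert l
  simpa [Fin.forall_iff_succAbove k] using ⟨hy, hys⟩

theorem IsPolymorphismOf.insertNth {f : Fin m → (Fin (n + 1) → α) → α} (hf : IsPolymorphismOf P f)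
    (q : Fin (n + 1)) {y : Fin m → α} (hy : y ∈ P) :
    IsPolymorphismOf P fun i v => f i (q.insertNth (y i) v) := fun ys hys => by
  simpa only [insertNth_apply_eq] using hf _ (insertNth_mem (k := q) hy hys)

theorem isPolymorphismOf_of_selects [NeZero n] {f : Fin m → (Fin (n + 1) → α) → α}
    {k : Fin (n + 1)}
    (hline : ∀ xs : Fin (n + 1) → Fin m → α, (∀ l, xs l ∈ P) → ConformsToCert P (line f k xs))
    {g : Fin m → (Fin n → α) → α} (hg : ∀ i, Selects (g i) fun v a => f i (k.insertNth a v)) :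
    IsPolymorphismOf P g := by
  refine fun ys hys => (hline _ (insertNth_mem (k := k) (hys 0) hys)).mem fun i c hc => ?_
  simp only [line, insertNth_apply_eq, Fin.update_insertNth] at hc
  exact hg i _ c hc

theorem exists_const_of_selects_of_isDictatorial [Nontrivial α] [Nontrivial (Fin m)] [NeZero n]
    (hΦ : ∀ φ ∈ Φ, ∀ i j, φ i = φ j) (hv : ¬ Vulnerable P) (hT : TrivialAt P Φ n)
    {f : Fin m → (Fin (n + 1) → α) → α} {k : Fin (n + 1)}
    (hline : ∀ xs : Fin (n + 1) → Fin m → α, (∀ l, xs l ∈ P) → ConformsToCert P (line f k xs))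
    {g : Fin m → (Fin n → α) → α} (hg : ∀ i, Selects (g i) fun v a => f i (k.insertNth a v))
    (hgd : IsDictatorial Φ g) (i : Fin m) (v : Fin n → α) :
    ∃ c, ∀ a, f i (k.insertNth a v) = c := by
  classical
  obtain ⟨l, χ, hχ⟩ := hgd.exists_perm hΦ
  by_contra! hne
  obtain ⟨b, hb⟩ := exists_ne (g i v)
  let g' := update g i (update (g i) v b)
  have hg' : ∀ j, Selects (g' j) fun v a => f j (k.insertNth a v) :=
    (forall_update_iff g fun j (r : (Fin n → α) → α) =>
      Selects r fun v a => f j (k.insertNth a v)).2 ⟨(hg i).update hne b, fun j _ => hg j⟩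
  have hg'_ne : ∀ j ≠ i, g' j = g i := fun j hj => by
    funext x
    simp only [g', update_of_ne hj, hχ]
  have hg'_eq : g' i = g i := by
    refine eq_of_forall_ne_eq hv (fun c => ?_) hg'_ne ?_
    · obtain ⟨a, ha⟩ := χ.surjective.exists.1 (exists_ne c)
      exact ⟨fun _ => a, by rwa [hχ]⟩
    · refine (hT g' (isPolymorphismOf_of_selects hline hg')).imp_left fun hd => ?_
      obtain ⟨l', θ, hθ⟩ := hd.exists_perm hΦ
      exact ⟨fun x => θ (x l'), fun j => funext (hθ j)⟩
  exact hb (by simpa [g'] using congrFun hg'_eq v)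

theorem isDictatorial_or_conformsToCert_of_line [Nontrivial α] [Nontrivial (Fin m)] [NeZero n]
    (hΦ : ∀ φ ∈ Φ, ∀ i j, φ i = φ j) (hv : ¬ Vulnerable P) (hT : TrivialAt P Φ n)
    {f : Fin m → (Fin (n + 1) → α) → α} {k : Fin (n + 1)}
    (hline : ∀ xs : Fin (n + 1) → Fin m → α, (∀ l, xs l ∈ P) → ConformsToCert P (line f k xs)) :
    IsDictatorial Φ f ∨ ConformsToCert P f := by
  have hinsert : ∀ i x, f i (k.insertNth (x k) (k.removeNth x)) = f i x := fun i x => by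
    rw [Fin.insertNth_self_removeNth]
  choose g hg hgconst using fun i => exists_selects fun v a => f i (k.insertNth a v)
  rcases hT g (isPolymorphismOf_of_selects hline hg) with hgd | ⟨ρ, hρ, hgρ⟩
  · have hconst := exists_const_of_selects_of_isDictatorial hΦ hv hT hline hg hgd
    obtain ⟨l, φ, hφ, hgφ⟩ := hgd
    refine Or.inl ⟨k.succAbove l, φ, hφ, fun i x => ?_⟩
    obtain ⟨c, hc⟩ := hconst i (k.removeNth x)
    rw [← hinsert, hc, ← hg i _ c hc, hgφ, Fin.removeNth]
  · refine Or.inr ⟨ρ, hρ, fun i σ hi x => ?_⟩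
    rw [← hinsert, hgconst i σ (hgρ i σ hi)]

theorem exists_isDiagonalPerm_line [Nontrivial α] [Nontrivial (Fin m)] [NeZero n]
    (hΦ : ∀ φ ∈ Φ, ∀ i j, φ i = φ j) (hv : ¬ Vulnerable P) (hU : UnaryTrivial P)
    (hT : TrivialAt P Φ n) {f : Fin m → (Fin (n + 1) → α) → α} (hf : IsPolymorphismOf P f)
    (hfd : ¬ IsDictatorial Φ f) (hfc : ¬ ConformsToCert P f) (k : Fin (n + 1)) :
    ∃ xs : Fin (n + 1) → Fin m → α, (∀ l, xs l ∈ P) ∧ IsDiagonalPerm (line f k xs) := by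
  by_contra! hne
  refine (isDictatorial_or_conformsToCert_of_line hΦ hv hT (k := k) fun xs hxs => ?_).elim hfd hfc
  exact (hU _ fun x hx => hf.line_mem k hxs hx).resolve_left (hne xs hxs)

theorem exists_perm_of_isDiagonalPerm_line [Nontrivial α] [Nonempty (Fin m)]
    (hΦ : ∀ φ ∈ Φ, ∀ i j, φ i = φ j) (hv : ¬ Vulnerable P) (hT : TrivialAt P Φ n)
    {f : Fin m → (Fin (n + 1) → α) → α} (hf : IsPolymorphismOf P f) {k q : Fin (n + 1)}
    (hqk : q ≠ k) {xs : Fin (n + 1) → Fin m → α} (hxs : ∀ l, xs l ∈ P)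
    (hline : IsDiagonalPerm (line f k xs)) (i : Fin m) :
    ∃ χ : Perm α, ∀ x, x q = xs q i → f i x = χ (x k) := by
  obtain ⟨φ, hφ⟩ := hline
  have hφ_ne : ∀ c, ∃ a, φ a ≠ c := fun c => φ.surjective.exists.1 (exists_ne c)
  have hfreeze : ∀ j x, x q = xs q j → f j (q.insertNth (xs q j) (q.removeNth x)) = f j x :=
    fun j x hx => by rw [← hx, Fin.insertNth_self_removeNth]
  have hline_q : ∀ j a, update (fun l => xs l j) k a q = xs q j := fun j a => update_of_ne hqk _ _
  rcases hT _ (hf.insertNth q (hxs q)) with hd | hc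
  · obtain ⟨l, χ, hχ⟩ := hd.exists_perm hΦ
    have hfχ : ∀ x, x q = xs q i → f i x = χ (x (q.succAbove l)) := fun x hx => by
      rw [← hfreeze i x hx, hχ]
      rfl
    rcases eq_or_ne (q.succAbove l) k with hl | hl
    · exact ⟨χ, hl ▸ hfχ⟩
    · obtain ⟨a, ha⟩ := hφ_ne (χ (xs (q.succAbove l) i))
      refine absurd ?_ ha
      rw [← hφ i a, line, hfχ _ (hline_q i a), update_of_ne hl]
  · obtain ⟨j, c, hconst⟩ := ConformsToCert.exists_const hc hv
    obtain ⟨a, ha⟩ := hφ_ne c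
    refine absurd ?_ ha
    rw [← hφ j a, line, ← hfreeze j _ (hline_q j a), hconst]

theorem apply_eq_of_conditional_dictators {ι β : Type*} {g : (ι → α) → β}
    {k l r : ι} (hkl : k ≠ l) (hkr : k ≠ r) (hlr : l ≠ r) {s t : α} {χ θ : α → β}
    (hχ : ∀ x, x r = s → g x = χ (x k)) (hθ : ∀ x, x k = t → g x = θ (x l)) (a : α) :
    θ a = χ t := by
  classical
  let x := update (update (fun _ => s) k t) l a
  have hr : x r = s := by simp [x, hkr.symm, hlr.symm]
  have hk : x k = t := by simp [x, hkl]
  have hl : x l = a := by simp [x]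
  rw [← hl, ← hθ x hk, ← hk, hχ x hr]

theorem eq_one_of_forall_isDiagonalPerm_line [Nontrivial α] [Nonempty (Fin m)] [NeZero n]
    (hΦ : ∀ φ ∈ Φ, ∀ i j, φ i = φ j) (hv : ¬ Vulnerable P) (hT : TrivialAt P Φ n)
    {f : Fin m → (Fin (n + 1) → α) → α} (hf : IsPolymorphismOf P f)
    (hline : ∀ k, ∃ xs : Fin (n + 1) → Fin m → α,
      (∀ l, xs l ∈ P) ∧ IsDiagonalPerm (line f k xs)) : n = 1 := by
  by_contra hn1
  have hn2 : 2 < n + 1 := by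
    have := NeZero.ne n
    omega
  obtain ⟨r, hr0, hr1⟩ := Fin.exists_ne_and_ne_of_two_lt 0 1 hn2
  have i : Fin m := Classical.arbitrary _
  obtain ⟨xs, hxs, hxs_line⟩ := hline 0
  obtain ⟨ys, hys, hys_line⟩ := hline 1
  have h01 : (0 : Fin (n + 1)) ≠ 1 := by simp
  obtain ⟨χ, hχ⟩ := exists_perm_of_isDiagonalPerm_line hΦ hv hT hf hr0 hxs hxs_line i
  obtain ⟨θ, hθ⟩ := exists_perm_of_isDiagonalPerm_line hΦ hv hT hf h01 hys hys_line i
  obtain ⟨a, ha⟩ := θ.surjective.exists.1 (exists_ne (χ (ys 0 i)))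
  exact ha (apply_eq_of_conditional_dictators h01 hr0.symm hr1.symm hχ hθ a)

end Lines

section Or

variable {α : Type*} {m : ℕ} {P : Set (Fin m → α)} {c : Fin m → α}

open Classical in
/-- The binary operation with neutral element `c` that otherwise returns its second argument; on a
two-element alphabet this is the Boolean OR, with `c` as the value false. -/
noncomputable def orAt (c a b : α) : α :=
  if b = c then a else b

theorem orAt_neutral (c a : α) : orAt c a c = a := if_pos rfl

theorem orAt_of_ne {b c : α} (hb : b ≠ c) (a : α) : orAt c a b = b := if_neg hb

theorem orAt_self (c a : α) : orAt c a a = a := ite_self a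

theorem not_isDictFn_orAt [Nontrivial α] (c : α) :
    ¬ IsDictFn fun v : Fin 2 → α => orAt c (v 0) (v 1) := by
  rintro ⟨k, u, hu⟩
  obtain ⟨s, hs⟩ := exists_ne c
  have hcc : c = u (![c, c] k) := by simpa [orAt_self] using hu ![c, c]
  have hcs : s = u (![c, s] k) := by simpa [orAt_of_ne hs] using hu ![c, s]
  have hsc : s = u (![s, c] k) := by simpa [orAt_neutral] using hu ![s, c]
  fin_cases k
  · exact hs (hcs.trans hcc.symm)
  · exact hs (hsc.trans hcc.symm)

theorem exists_unanimous_of_orAt_mem [Nontrivial α]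
    (hP : ∀ z ∈ P, ∀ w ∈ P, (fun i => orAt (c i) (z i) (w i)) ∈ P) :
    ∃ f : Fin m → (Fin 2 → α) → α,
      IsPolymorphismOf P f ∧ ∀ i, Unanimous (f i) ∧ ¬ IsDictFn (f i) :=
  ⟨fun i v => orAt (c i) (v 0) (v 1), fun _ hxs => hP _ (hxs 0) _ (hxs 1),
    fun i => ⟨orAt_self (c i), not_isDictFn_orAt (c i)⟩⟩

theorem orAt_mem_of_forall_ne {y t : Fin m → α} (hyt : ∀ i, t i ≠ y i) (hP : P ⊆ {y, t})
    {z w : Fin m → α} (hz : z ∈ P) (hw : w ∈ P) : (fun i => orAt (y i) (z i) (w i)) ∈ P := by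
  rcases hP hw with rfl | rfl
  · simpa only [orAt_neutral] using hz
  · simpa only [orAt_of_ne (hyt _)] using hw

end Or

section Binary

variable {α : Type*} {m : ℕ} {P : Set (Fin m → α)} {F : Fin m → α → α → α}
  {x y z w t : Fin m → α} {φ ψ : Perm α}

/-- The members `z` of `P` for which the unary polymorphism `F(·, z)` is a diagonal permutation:
the set `T` of the proof idea. -/
def diagonalSections (P : Set (Fin m → α)) (F : Fin m → α → α → α) : Set (Fin m → α) :=
  {z ∈ P | ∃ χ : Perm α, ∀ i a, F i a (z i) = χ a}

/-- The section `g(·, σ)` is constant. -/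
def IsConstAt (g : α → α → α) (σ : α) : Prop :=
  ∃ c, ∀ a, g a σ = c

theorem not_isConstAt_of_mem_diagonalSections [Nontrivial α] (hz : z ∈ diagonalSections P F)
    (i : Fin m) : ¬ IsConstAt (F i) (z i) := by
  obtain ⟨-, χ, hχ⟩ := hz
  rintro ⟨c, hc⟩
  obtain ⟨a, ha⟩ := χ.surjective.exists.1 (exists_ne c)
  exact ha (by rw [← hχ i, hc])

theorem eq_of_mem_diagonalSections (hψ : ∀ i b, F i (x i) b = ψ b)
    (hz : z ∈ diagonalSections P F) (hw : w ∈ diagonalSections P F) {i : Fin m}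
    (hzw : z i = w i) : z = w := by
  obtain ⟨-, χ, hχ⟩ := hz
  obtain ⟨-, θ, hθ⟩ := hw
  have hχθ : ∀ a, χ a = θ a := fun a => by rw [← hχ i, ← hθ i, hzw]
  funext j
  apply ψ.injective
  rw [← hψ j, ← hψ j, hχ, hθ, hχθ]

theorem mem_diagonalSections_or_exists_isConstAt [Nonempty α] [Nonempty (Fin m)]
    (hv : ¬ Vulnerable P) (hU : UnaryTrivial P)
    (hF : ∀ z ∈ P, ∀ w ∈ P, (fun i => F i (z i) (w i)) ∈ P) (hw : w ∈ P) :
    w ∈ diagonalSections P F ∨ ∃ i, IsConstAt (F i) (w i) :=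
  (hU (fun i a => F i a (w i)) fun z hz => hF z hz w hw).imp (fun h => ⟨hw, h⟩)
    fun h => h.exists_const hv

theorem unary_mem_of_eqOn_isConstAt (hU : UnaryTrivial P)
    (hF : ∀ z ∈ P, ∀ w ∈ P, (fun i => F i (z i) (w i)) ∈ P) (hψ : ∀ i b, F i (x i) b = ψ b)
    {u : Fin m → α → α} (hu : ∀ i σ, IsConstAt (F i) σ → u i σ = ψ σ)
    (huT : ∀ z ∈ diagonalSections P F, (fun i => u i (z i)) ∈ P) (hz : z ∈ P) :
    (fun i => u i (z i)) ∈ P := by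
  rcases hU (fun i a => F i a (z i)) fun w hw => hF w hw z hz with hd | hc
  · exact huT z ⟨hz, hd⟩
  · refine hc.mem fun i c hc => ?_
    rw [hu i _ ⟨c, hc⟩, ← hψ i, hc]

-- Otherwise `ψ` could be altered at the single point `σ` of coordinate `i`.
theorem isConstAt_or_exists_mem_diagonalSections [Nontrivial α] [Nontrivial (Fin m)]
    (hv : ¬ Vulnerable P) (hU : UnaryTrivial P)
    (hF : ∀ z ∈ P, ∀ w ∈ P, (fun i => F i (z i) (w i)) ∈ P) (hx : x ∈ P)
    (hψ : ∀ i b, F i (x i) b = ψ b) (i : Fin m) (σ : α) :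
    IsConstAt (F i) σ ∨ ∃ z ∈ diagonalSections P F, z i = σ := by
  classical
  by_contra! hσ
  obtain ⟨hσ_const, hσ_sec⟩ := hσ
  obtain ⟨b, hb⟩ := exists_ne (ψ σ)
  let u : Fin m → α → α := update (fun _ => ψ) i (update ψ σ b)
  have hu_apply : ∀ j τ, (j = i → τ ≠ σ) → u j τ = ψ τ := by
    intro j τ hτ
    rcases eq_or_ne j i with rfl | hj
    · simp [u, hτ rfl]
    · simp [u, hj]
  have hu_const : ∀ j τ, IsConstAt (F j) τ → u j τ = ψ τ := fun j τ hτ =>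
    hu_apply j τ (by rintro rfl rfl; exact hσ_const hτ)
  have hu_sec : ∀ z ∈ diagonalSections P F, (fun j => u j (z j)) ∈ P := fun z hz => by
    have huz : ∀ j, u j (z j) = ψ (z j) := fun j => hu_apply j _ (by rintro rfl; exact hσ_sec z hz)
    simpa only [huz, hψ] using hF x hx z hz.1
  have hu_eq : u i = ψ := by
    refine eq_of_forall_ne_eq hv (fun c => ψ.surjective.exists.1 (exists_ne c))
      (fun j hj => update_of_ne hj _ _) ?_
    exact (hU u fun z hz => unary_mem_of_eqOn_isConstAt hU hF hψ hu_const hu_sec hz).imp_left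
      fun ⟨χ, hχ⟩ => ⟨χ, fun j => funext (hχ j)⟩
  exact hb (by simpa [u] using congrFun hu_eq σ)

theorem injective_or_const_of_diagonalSections [Nontrivial α] [Nonempty (Fin m)]
    (hv : ¬ Vulnerable P) (hU : UnaryTrivial P)
    (hF : ∀ z ∈ P, ∀ w ∈ P, (fun i => F i (z i) (w i)) ∈ P) (hx : x ∈ P)
    (hψ : ∀ i b, F i (x i) b = ψ b) (hy : y ∈ diagonalSections P F)
    (e : diagonalSections P F → diagonalSections P F) :
    Injective e ∨ (∀ z w, e z = e w) ∧ ∃ i, ∀ σ, ¬ IsConstAt (F i) σ := by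
  let T := diagonalSections P F
  have hinj : ∀ i, Injective fun z : T => z.1 i := fun i z w hzw =>
    Subtype.ext (eq_of_mem_diagonalSections hψ z.2 w.2 hzw)
  let u : Fin m → α → α := fun i => extend (fun z : T => z.1 i) (fun z => ψ ((e z).1 i)) ψ
  have hu_sec : ∀ i (z : T), u i (z.1 i) = ψ ((e z).1 i) := fun i => (hinj i).extend_apply _ _
  have hu_const : ∀ i σ, IsConstAt (F i) σ → u i σ = ψ σ := fun i σ hσ =>
    extend_apply' _ _ _ fun ⟨z, hz⟩ => not_isConstAt_of_mem_diagonalSections z.2 i (hz ▸ hσ)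
  have hu_mem : ∀ z ∈ T, (fun i => u i (z i)) ∈ P := fun z hz => by
    simpa only [hu_sec _ ⟨z, hz⟩, hψ] using hF x hx _ (e ⟨z, hz⟩).2.1
  rcases hU u fun z hz => unary_mem_of_eqOn_isConstAt hU hF hψ hu_const hu_mem hz with ⟨χ, hχ⟩ | hc
  · have i : Fin m := Classical.arbitrary _
    refine Or.inl fun z w hzw => hinj i (χ.injective ?_)
    rw [← hχ i, ← hχ i, hu_sec, hu_sec, hzw]
  · obtain ⟨i, c, hconst⟩ := hc.exists_const hv
    have he : ∀ z, ψ ((e z).1 i) = c := fun z => hu_sec i z ▸ hconst _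
    refine Or.inr ⟨fun z w => hinj i (ψ.injective ((he z).trans (he w).symm)), i, fun σ hσ => ?_⟩
    let z : T := ⟨y, hy⟩
    refine not_isConstAt_of_mem_diagonalSections (e z).2 i ?_
    have hσ_eq : σ = (e z).1 i := ψ.injective (by rw [← hu_const i σ hσ, hconst, he])
    exact hσ_eq ▸ hσ

theorem eq_or_eq_of_forall_injective_or_const {T : Type*}
    (hT : ∀ e : T → T, Injective e ∨ ∀ z w, e z = e w) {y t : T} (hty : t ≠ y) (s : T) :
    s = y ∨ s = t := by
  classical
  by_contra! hs
  rcases hT (update (fun _ => y) t t) with hinj | hconst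
  · exact hs.1 (hinj (by simp [hs.2, hty.symm]))
  · exact hty (by simpa [hty.symm] using hconst t y)

theorem card_eq_two_and_orAt_mem_of_ne [Nontrivial α] [Nontrivial (Fin m)]
    (hv : ¬ Vulnerable P) (hU : UnaryTrivial P)
    (hF : ∀ z ∈ P, ∀ w ∈ P, (fun i => F i (z i) (w i)) ∈ P) (hx : x ∈ P)
    (hψ : ∀ i b, F i (x i) b = ψ b) (hy : y ∈ diagonalSections P F)
    (ht : t ∈ diagonalSections P F) (hty : t ≠ y) :
    Nat.card α = 2 ∧ ∀ z ∈ P, ∀ w ∈ P, (fun i => orAt (y i) (z i) (w i)) ∈ P := by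
  have hself := injective_or_const_of_diagonalSections hv hU hF hx hψ hy
  have hT : diagonalSections P F ⊆ {y, t} := fun s hs => by
    simpa using eq_or_eq_of_forall_injective_or_const (fun e => (hself e).imp_right And.left)
      (y := ⟨y, hy⟩) (t := ⟨t, ht⟩) (by simpa using hty) ⟨s, hs⟩
  have hne : ∀ i, t i ≠ y i := fun i h => hty (eq_of_mem_diagonalSections hψ ht hy h)
  have hcard : Nat.card α = 2 := by
    obtain ⟨i, hi⟩ : ∃ i, ∀ σ, ¬ IsConstAt (F i) σ :=
      ((hself fun _ => ⟨y, hy⟩).resolve_left fun hinj =>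
        hty (by simpa using @hinj ⟨t, ht⟩ ⟨y, hy⟩ rfl)).2
    refine Nat.card_eq_two_iff.2 ⟨y i, t i, (hne i).symm, eq_univ_of_forall fun σ => ?_⟩
    obtain ⟨z, hz, rfl⟩ :=
      (isConstAt_or_exists_mem_diagonalSections hv hU hF hx hψ i σ).resolve_left (hi σ)
    exact (hT hz).imp (congrFun · i) (congrFun · i)
  have hPT : P ⊆ diagonalSections P F := fun w hw => by
    refine (mem_diagonalSections_or_exists_isConstAt hv hU hF hw).resolve_right fun ⟨i, hi⟩ => ?_
    rcases eq_or_ne (w i) (y i) with hwy | hwy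
    · exact not_isConstAt_of_mem_diagonalSections hy i (hwy ▸ hi)
    · have hwt := ((Nat.card_eq_two_iff' (y i)).1 hcard).unique hwy (hne i)
      exact not_isConstAt_of_mem_diagonalSections ht i (hwt ▸ hi)
  exact ⟨hcard, fun z hz w hw => orAt_mem_of_forall_ne hne (hPT.trans hT) hz hw⟩

theorem card_eq_two_of_sections_eq [Nontrivial α] [Nonempty (Fin m)] (hP : NonDegenerate P)
    (hv : ¬ Vulnerable P) (hU : UnaryTrivial P)
    (hF : ∀ z ∈ P, ∀ w ∈ P, (fun i => F i (z i) (w i)) ∈ P)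
    (hφ : ∀ i a, F i a (y i) = φ a) (hψ : ∀ i b, F i (x i) b = ψ b)
    (hne : ∀ i a b, b ≠ y i → F i a b = ψ b) : Nat.card α = 2 := by
  have i₀ : Fin m := Classical.arbitrary _
  obtain ⟨s, hs⟩ := exists_ne (x i₀)
  obtain ⟨x', hx', rfl⟩ := hP.1 i₀ s
  rcases hU (fun i b => F i (x' i) b) fun z hz => hF x' hx' z hz with hd | hc
  · -- The permutation `χ` takes the value `φ (x' i₀)` both at `y i₀` and at some `b ≠ y i₀`.
    obtain ⟨χ, hχ⟩ : ∃ χ : Perm α, ∀ i b, F i (x' i) b = χ b := hd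
    obtain ⟨b, hb⟩ := ψ.surjective (φ (x' i₀))
    have hby : b ≠ y i₀ := by
      rintro rfl
      exact hs (φ.injective (by rw [← hb, ← hφ i₀ (x i₀), hψ]))
    refine absurd (χ.injective ?_) hby
    rw [← hχ i₀, ← hχ i₀, hne i₀ _ b hby, hφ, hb]
  · obtain ⟨j, c, hconst⟩ := hc.exists_const hv
    obtain ⟨d, hd⟩ := exists_ne (y j)
    refine (Nat.card_eq_two_iff' (y j)).2 ⟨d, hd, fun b hb => ψ.injective ?_⟩
    rw [← hne j (x' j) b hb, ← hne j (x' j) d hd, hconst, hconst]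

theorem perm_symm_mem_of_finite [Finite α] {χ : Perm α} (hχ : ∀ z ∈ P, (fun i => χ (z i)) ∈ P) :
    ∀ z ∈ P, (fun i => χ.symm (z i)) ∈ P :=
  Perm.perm_symm_mapsTo_of_mapsTo (Equiv.piCongrRight fun _ => χ) hχ

theorem orAt_mem_of_sections_eq [Finite α]
    (hF : ∀ z ∈ P, ∀ w ∈ P, (fun i => F i (z i) (w i)) ∈ P) (hx : x ∈ P) (hy : y ∈ P)
    (hφ : ∀ i a, F i a (y i) = φ a) (hψ : ∀ i b, F i (x i) b = ψ b)
    (hne : ∀ i a b, b ≠ y i → F i a b = ψ b) (hz : z ∈ P) (hw : w ∈ P) :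
    (fun i => orAt (ψ (y i)) (z i) (w i)) ∈ P := by
  have hφP : ∀ z ∈ P, (fun i => φ (z i)) ∈ P := fun z hz => by
    simpa only [hφ] using hF z hz y hy
  have hψP : ∀ z ∈ P, (fun i => ψ (z i)) ∈ P := fun z hz => by
    simpa only [hψ] using hF x hx z hz
  convert hF _ (perm_symm_mem_of_finite hφP z hz) _ (perm_symm_mem_of_finite hψP w hw) using 2
    with i
  rcases eq_or_ne (w i) (ψ (y i)) with hwy | hwy
  · simp [hwy, orAt_neutral, hφ]
  · rw [orAt_of_ne hwy, hne i _ _ fun h => hwy (by simp [← h]), apply_symm_apply]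

theorem card_eq_two_and_exists_orAt_mem [Nontrivial α] [Nontrivial (Fin m)]
    (hP : NonDegenerate P) (hv : ¬ Vulnerable P) (hU : UnaryTrivial P)
    (hF : ∀ z ∈ P, ∀ w ∈ P, (fun i => F i (z i) (w i)) ∈ P) (hx : x ∈ P) (hy : y ∈ P)
    (hφ : ∀ i a, F i a (y i) = φ a) (hψ : ∀ i b, F i (x i) b = ψ b) :
    Nat.card α = 2 ∧
      ∃ c : Fin m → α, ∀ z ∈ P, ∀ w ∈ P, (fun i => orAt (c i) (z i) (w i)) ∈ P := by
  have hyT : y ∈ diagonalSections P F := ⟨hy, φ, hφ⟩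
  by_cases hT : ∃ t ∈ diagonalSections P F, t ≠ y
  · obtain ⟨t, ht, hty⟩ := hT
    exact (card_eq_two_and_orAt_mem_of_ne hv hU hF hx hψ hyT ht hty).imp_right fun h => ⟨y, h⟩
  · push Not at hT
    have hne : ∀ i a b, b ≠ y i → F i a b = ψ b := by
      intro i a b hb
      rcases isConstAt_or_exists_mem_diagonalSections hv hU hF hx hψ i b with ⟨c, hc⟩ | ⟨z, hz, rfl⟩
      · rw [hc, ← hc (x i), hψ]
      · exact absurd (congrFun (hT z hz) i) hb
    have hcard := card_eq_two_of_sections_eq hP hv hU hF hφ hψ hne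
    have := Nat.finite_of_card_ne_zero (hcard.trans_ne two_ne_zero)
    exact ⟨hcard, _, fun z hz w hw => orAt_mem_of_sections_eq hF hx hy hφ hψ hne hz hw⟩

theorem card_eq_two_and_exists_orAt_mem_of_lines [Nontrivial α] [Nontrivial (Fin m)]
    (hP : NonDegenerate P) (hv : ¬ Vulnerable P) (hU : UnaryTrivial P)
    {f : Fin m → (Fin 2 → α) → α} (hf : IsPolymorphismOf P f)
    (hline : ∀ k, ∃ xs : Fin 2 → Fin m → α, (∀ l, xs l ∈ P) ∧ IsDiagonalPerm (line f k xs)) :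
    Nat.card α = 2 ∧
      ∃ c : Fin m → α, ∀ z ∈ P, ∀ w ∈ P, (fun i => orAt (c i) (z i) (w i)) ∈ P := by
  obtain ⟨ys, hys, φ, hφ⟩ := hline 0
  obtain ⟨xs, hxs, ψ, hψ⟩ := hline 1
  refine card_eq_two_and_exists_orAt_mem (F := fun i a b => f i ![a, b]) hP hv hU ?_ (hxs 0)
    (hys 1) (φ := φ) (ψ := ψ) ?_ ?_
  · intro z hz w hw
    convert hf ![z, w] (Fin.forall_fin_two.2 ⟨hz, hw⟩) using 3 with i
    funext k
    fin_cases k <;> rfl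
  · intro i a
    rw [← hφ i a, line]
    congr 1
    funext k
    fin_cases k <;> rfl
  · intro i b
    rw [← hψ i b, line]
    congr 1
    funext k
    fin_cases k <;> rfl

end Binary

section Main

variable {α : Type*} {m : ℕ} {P : Set (Fin m → α)} {Φ : Set (Fin m → Perm α)}

theorem TrivialAt.phiTrivial_of_isEmpty [IsEmpty (Fin m)] (h1 : TrivialAt P Φ 1) :
    PhiTrivial P Φ := by
  intro p hp f _
  have hf1 : IsPolymorphismOf P fun i (_ : Fin 1 → α) => isEmptyElim i := fun xs hxs => by
    convert hxs 0
  rcases h1 _ hf1 with ⟨-, φ, hφ, -⟩ | ⟨ρ, hρ, -⟩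
  · exact Or.inl ⟨⟨0, hp⟩, φ, hφ, isEmptyElim⟩
  · exact Or.inr ⟨ρ, hρ, isEmptyElim⟩

theorem TrivialAt.exists_not_trivialAt_succ (h1 : TrivialAt P Φ 1) (hP : ¬ PhiTrivial P Φ) :
    ∃ n ≠ 0, TrivialAt P Φ n ∧ ¬ TrivialAt P Φ (n + 1) := by
  by_contra! hsucc
  exact hP fun p hp => Nat.le_induction h1 (fun n hn hT => hsucc n (by omega) hT) p hp

theorem stmt18_general (hΦ : ∀ φ ∈ Φ, ∀ i j : Fin m, φ i = φ j) (hnd : NonDegenerate P)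
    (h1 : TrivialAt P Φ 1) (hnt : ¬ PhiTrivial P Φ) :
    Vulnerable P ∨
      (Nat.card α = 2 ∧ ∃ f : Fin m → (Fin 2 → α) → α,
        IsPolymorphismOf P f ∧ ∀ i, Unanimous (f i) ∧ ¬ IsDictFn (f i)) := by
  refine or_iff_not_imp_left.2 fun hv => ?_
  rcases isEmpty_or_nonempty (Fin m) with hm | hm
  · exact absurd h1.phiTrivial_of_isEmpty hnt
  have := hnd.nontrivial
  have := hnd.nontrivial_index
  have hU := h1.unaryTrivial hΦ
  obtain ⟨n, hn, hT, hT'⟩ := h1.exists_not_trivialAt_succ hnt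
  have : NeZero n := ⟨hn⟩
  obtain ⟨f, hf, hfd, hfc⟩ : ∃ f : Fin m → (Fin (n + 1) → α) → α,
      IsPolymorphismOf P f ∧ ¬ IsDictatorial Φ f ∧ ¬ ConformsToCert P f := by
    simpa only [TrivialAt, ConformsToCert, Conforms, not_forall, not_or, exists_prop] using hT'
  have hline := exists_isDiagonalPerm_line hΦ hv hU hT hf hfd hfc
  obtain rfl := eq_one_of_forall_isDiagonalPerm_line hΦ hv hT hf hline
  obtain ⟨hcard, c, hc⟩ := card_eq_two_and_exists_orAt_mem_of_lines hnd hv hU hf hline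
  exact ⟨hcard, exists_unanimous_of_orAt_mem hc⟩

end Main

/-- if a non-degenerate `P` is `(1,Φ)`-trivial but not `Φ`-trivial, for a
diagonal `Φ`, then `P` is vulnerable or `|Σ| = 2` with an AND/OR-type polymorphism. -/
theorem stmt18 {α : Type*} [Fintype α] {m : ℕ}
    (P : Set (Fin m → α)) (Φ : Set (Fin m → Equiv.Perm α))
    (hΦ : ∀ φ ∈ Φ, ∀ i j : Fin m, φ i = φ j)
    (hnd : NonDegenerate P)
    (h1 : TrivialAt P Φ 1)
    (hnt : ¬ PhiTrivial P Φ) :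
    Vulnerable P ∨
      (Fintype.card α = 2 ∧ ∃ f : Fin m → (Fin 2 → α) → α,
        IsPolymorphismOf P f ∧ ∀ i, Unanimous (f i) ∧ ¬ IsDictFn (f i)) := by
  rw [← Nat.card_eq_fintype_card]
  exact stmt18_general hΦ hnd h1 hnt
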